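/- arXiv:math/0012202 — 3 statements merged into one kernel-verified Lean document; each statement's English description precedes it below -/
import Mathlib

section
/- For every γ' ∈ Γ₆^♮, the characteristic polynomial det(ζγ' − x·I₄) ∈ ℤ[x] is congruent to (1 − x)²(1 + x)² modulo 6; that is, every coefficient of det(ζγ' − x·I₄) − (1 − x)²(1 + x)² is divisible by 6. -/
open Matrix Polynomial

/-- 4×4 integer matrices. -/
abbrev M4 : Type := Matrix (Fin 4) (Fin 4) ℤ

/-- The standard symplectic form matrix J = [[0, I₂], [−I₂, 0]]. -/
def J4 : M4 := !![0,0,1,0; 0,0,0,1; -1,0,0,0; 0,-1,0,0]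

/-- Sp(4,ℤ): integer matrices γ with ᵗγ·J·γ = J. -/
def Sp4Z : Set M4 := {γ | γᵀ * J4 * γ = J4}

/-- The congruence pattern [[6,1,6,6],[6,6,6,36],[6,1,6,6],[1,1,1,6]]. -/
def pat6 : Matrix (Fin 4) (Fin 4) ℤ := !![6,1,6,6; 6,6,6,36; 6,1,6,6; 1,1,1,6]

/-- Γ₆^♮: elements of Sp(4,ℤ) with γ − I₄ entrywise in the pattern. -/
def Gamma6nat : Set M4 := {γ | γ ∈ Sp4Z ∧ ∀ i j, pat6 i j ∣ (γ - 1) i j}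

/-- ζ = diag(−1,1,−1,1). -/
def zetaM : M4 := !![-1,0,0,0; 0,1,0,0; 0,0,-1,0; 0,0,0,1]

/-- Γ₆^bil = Γ₆^♮ ∪ ζ·Γ₆^♮. -/
def Gamma6bil : Set M4 := Gamma6nat ∪ (fun γ => zetaM * γ) '' Gamma6nat

/-!
Counting coordinates from 0, the pattern allows nonzero residues modulo 6 off the diagonal only at
(0,1), (2,1), (3,0), (3,1) and (3,2), so listing the coordinates as 3, 0, 2, 1 makes the reduction
of γ' upper triangular with ones on the diagonal. Multiplying by the diagonal matrix ζ keeps it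
triangular and puts the entries of ζ on the diagonal, so the characteristic polynomial modulo 6 is
that of ζ.
-/

section Unitriangular

variable {R n α : Type*} [CommRing R] [Fintype n] [DecidableEq n] [LinearOrder α]
  {A M : Matrix n n R} {b : n → α}

theorem charpoly_of_blockTriangular_of_injective (hb : Function.Injective b)
    (hM : M.BlockTriangular b) : M.charpoly = ∏ i, (X - C (M i i)) :=
  letI : LinearOrder n := LinearOrder.lift' b hb
  charpoly_of_isUpperTriangular M fun _ _ hij => hM hij

theorem charpoly_diagonal_mul_of_unitriangular (d : n → R) (hb : Function.Injective b)
    (hA : ∀ ⦃i j⦄, b j ≤ b i → (A - 1) i j = 0) :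
    (diagonal d * A).charpoly = ∏ i, (X - C (d i)) := by
  have hA_tri : A.BlockTriangular b :=
    (BlockTriangular.sub_iff_left blockTriangular_one).1 fun _ _ hij => hA hij.le
  have hA_diag (i : n) : A i i = 1 := by
    simpa [sub_eq_zero] using hA (le_refl (b i))
  have hdA_tri : (diagonal d * A).BlockTriangular b := (blockTriangular_diagonal d).mul hA_tri
  simp [charpoly_of_blockTriangular_of_injective hb hdA_tri, hA_diag]

theorem coeff_charpoly_diagonal_mul_sub_prod_mem {I : Ideal R} (d : n → R)
    (hb : Function.Injective b) (hA : ∀ ⦃i j⦄, b j ≤ b i → (A - 1) i j ∈ I) (k : ℕ) :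
    ((diagonal d * A).charpoly - ∏ i, (X - C (d i))).coeff k ∈ I := by
  let π := Ideal.Quotient.mk I
  have hA_mod : ∀ ⦃i j⦄, b j ≤ b i → (A.map π - 1) i j = 0 := fun i j hij => by
    rw [← Matrix.map_one π (map_zero π) (map_one π), ← Matrix.map_sub π (map_sub π)]
    exact Ideal.Quotient.eq_zero_iff_mem.2 (hA hij)
  have hmap : (diagonal d * A).map π = diagonal (π ∘ d) * A.map π := by
    rw [Matrix.map_mul, diagonal_map (map_zero π)]
    rfl
  have hcharpoly : (diagonal d * A).charpoly.map π = (∏ i, (X - C (d i))).map π := by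
    rw [← charpoly_map, hmap, charpoly_diagonal_mul_of_unitriangular _ hb hA_mod]
    simp [Polynomial.map_prod]
  rw [← Ideal.Quotient.eq_zero_iff_mem, ← coeff_map, Polynomial.map_sub, hcharpoly, sub_self,
    coeff_zero]

theorem det_map_C_sub_X_smul_one (M : Matrix n n R) :
    (M.map C - (X : R[X]) • (1 : Matrix n n R[X])).det =
      (-1) ^ Fintype.card n * M.charpoly := by
  rw [Matrix.charpoly, ← det_neg, charmatrix, neg_sub, smul_one_eq_diagonal]
  rfl

end Unitriangular

theorem zetaM_eq_diagonal : zetaM = diagonal ![-1, 1, -1, 1] := by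
  decide

/-- The position of each coordinate in the ordering 3, 0, 2, 1, for which the elements of
`Gamma6nat` become upper unitriangular modulo 6. -/
def coordPos : Fin 4 → Fin 4 := ![1, 3, 2, 0]

theorem coordPos_injective : Function.Injective coordPos := by
  decide

theorem six_dvd_pat6_of_coordPos_le {i j : Fin 4} (hij : coordPos j ≤ coordPos i) :
    6 ∣ pat6 i j :=
  Int.dvd_of_emod_eq_zero (by decide +revert)

theorem charpoly_zeta_congruent_mod_six_general {m : ℤ} {γ : M4}
    (hγ : ∀ ⦃i j⦄, coordPos j ≤ coordPos i → m ∣ (γ - 1) i j) (n : ℕ) :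
    m ∣
      (Matrix.det ((zetaM * γ).map (Polynomial.C) -
          (Polynomial.X : ℤ[X]) • (1 : Matrix (Fin 4) (Fin 4) ℤ[X])) -
        (1 - Polynomial.X) ^ 2 * (1 + Polynomial.X) ^ 2).coeff n := by
  have hprod : ∏ i, (X - C ((![-1, 1, -1, 1] : Fin 4 → ℤ) i)) = (1 - X) ^ 2 * (1 + X) ^ 2 := by
    simp only [Fin.prod_univ_four, cons_val, map_neg, map_one]
    ring
  have hdet : ((zetaM * γ).map C - (X : ℤ[X]) • (1 : Matrix (Fin 4) (Fin 4) ℤ[X])).det =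
      (zetaM * γ).charpoly := by
    rw [det_map_C_sub_X_smul_one, Fintype.card_fin, Even.neg_one_pow (by decide), one_mul]
  rw [hdet, ← hprod, zetaM_eq_diagonal, ← Ideal.mem_span_singleton]
  exact coeff_charpoly_diagonal_mul_sub_prod_mem _ coordPos_injective
    (fun i j hij => Ideal.mem_span_singleton.2 (hγ hij)) n

/-- For γ' ∈ Γ₆^♮, the characteristic polynomial det(ζγ' − x·I₄) is congruent to
(1 − x)²(1 + x)² modulo 6: every coefficient of the difference is divisible by 6. -/
theorem charpoly_zeta_congruent_mod_six (γ' : M4) (hγ' : γ' ∈ Gamma6nat) (n : ℕ) :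
    (6 : ℤ) ∣
      (Matrix.det ((zetaM * γ').map (Polynomial.C) -
          (Polynomial.X : ℤ[X]) • (1 : Matrix (Fin 4) (Fin 4) ℤ[X])) -
        (1 - Polynomial.X) ^ 2 * (1 + Polynomial.X) ^ 2).coeff n := by
  exact charpoly_zeta_congruent_mod_six_general
    (fun i j hij => (six_dvd_pat6_of_coordPos_le hij).trans (hγ'.2 i j)) n
end

section
/- Every element γ ≠ I₄ of finite order in Γ₆^bil satisfies γ² = I₄ and lies in the coset ζΓ₆^♮ (i.e. ζγ ∈ Γ₆^♮). -/
open Matrix Polynomial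

/-!
Let `g` be an integer matrix of finite order which is unipotent modulo a prime `p`. If `g ^ n = 1`
with `n` prime to `p`, then modulo every power of `p` the element `1 + g + ⋯ + g ^ (n - 1)` is a
unit (it is `n` plus a nilpotent) that annihilates `g - 1`; hence `g = 1`. Applied to powers of `g`,
this shows that the order of `g` is a power of `p`. If `g` satisfies the congruence pattern, then
modulo `6` the matrix `g - 1` becomes strictly lower triangular once the indices are ordered as
`1, 0, 2, 3`, so `g` is unipotent modulo both `2` and `3`, and its order, being a power of each, is
`1`. Conjugation by `ζ` preserves the pattern, so `(ζ g) ^ 2 = (ζ g ζ) g` satisfies it along with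
`g`, which settles the coset of `ζ`.
-/

section Ring

variable {R S : Type*} [Ring R] [Ring S] {x : R} {n p q : ℕ}

lemma sub_one_pow_dvd_pow_sub_one_pow (x : R) (k m : ℕ) : (x - 1) ^ m ∣ (x ^ k - 1) ^ m := by
  have hcomm : Commute (x - 1) (∑ i ∈ Finset.range k, x ^ i) :=
    .sum_right _ _ _ fun i _ ↦ ((Commute.refl x).pow_right i).sub_left (.one_left _)
  rw [← mul_geom_sum, hcomm.mul_pow]
  exact dvd_mul_right _ _

lemma eq_one_of_pow_eq_one_of_isNilpotent_sub_one (hn : IsUnit (n : R))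
    (hx : IsNilpotent (x - 1)) (hxn : x ^ n = 1) : x = 1 := by
  have hnil (i : ℕ) : IsNilpotent (x ^ i - 1) := by
    obtain ⟨m, hm⟩ := hx
    exact ⟨m, zero_dvd_iff.1 (hm ▸ sub_one_pow_dvd_pow_sub_one_pow x i m)⟩
  have hcomm (i j : ℕ) : Commute (x ^ i - 1) (x ^ j - 1) :=
    ((Commute.pow_pow_self x i j).sub_right (.one_right _)).sub_left (.one_left _)
  have hsum : ∑ i ∈ Finset.range n, x ^ i = ∑ i ∈ Finset.range n, (x ^ i - 1) + n := by simp
  have hunit : IsUnit (∑ i ∈ Finset.range n, x ^ i) := by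
    rw [hsum]
    exact (Commute.isNilpotent_sum (fun i _ ↦ hnil i) fun i j _ _ ↦ hcomm i j)
      |>.isUnit_add_right_of_commute hn (Nat.commute_cast _ n)
  have hmul : (∑ i ∈ Finset.range n, x ^ i) * (x - 1) = 0 := by rw [geom_sum_mul, hxn, sub_self]
  exact sub_eq_zero.1 (hunit.mul_right_eq_zero.1 hmul)

lemma isUnit_natCast_of_coprime_of_isNilpotent (hp : IsNilpotent (p : R)) (hnp : n.Coprime p) :
    IsUnit (n : R) := by
  obtain ⟨k, hk⟩ := hp
  obtain ⟨u, v, huv⟩ := Nat.isCoprime_iff_coprime.2 (hnp.pow_right k)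
  have hun : (u : R) * n = 1 := by
    simpa [hk] using congrArg (Int.cast : ℤ → R) huv
  exact isUnit_iff_exists.2 ⟨u, by rwa [(Int.cast_commute u (n : R)).eq] at hun, hun⟩

/-- `x` is unipotent modulo `p`: the image of `x - 1` in `R / pR` is nilpotent. Since `p` is central
in `R`, vanishing in `R / pR` is encoded as divisibility by `(p : R)`. -/
def IsUnipotentMod (p : ℕ) (x : R) : Prop := ∃ m : ℕ, (p : R) ∣ (x - 1) ^ m

namespace IsUnipotentMod

lemma of_dvd (hx : IsUnipotentMod q x) (hpq : p ∣ q) : IsUnipotentMod p x :=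
  hx.imp fun _ hm ↦ (Nat.cast_dvd_cast hpq).trans hm

lemma map (hx : IsUnipotentMod p x) (f : R →+* S) : IsUnipotentMod p (f x) := by
  obtain ⟨m, hm⟩ := hx
  exact ⟨m, by simpa using map_dvd f hm⟩

lemma pow (hx : IsUnipotentMod p x) (k : ℕ) : IsUnipotentMod p (x ^ k) := by
  obtain ⟨m, hm⟩ := hx
  exact ⟨m, hm.trans (sub_one_pow_dvd_pow_sub_one_pow x k m)⟩

lemma isNilpotent_sub_one (hx : IsUnipotentMod p x) (hp : IsNilpotent (p : R)) :
    IsNilpotent (x - 1) := by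
  obtain ⟨m, y, hy⟩ := hx
  refine .of_pow (m := m) ?_
  rw [hy]
  exact (Nat.cast_commute p y).isNilpotent_mul_right hp

lemma eq_one_of_pow_eq_one_of_isNilpotent (hx : IsUnipotentMod p x) (hp : IsNilpotent (p : R))
    (hnp : n.Coprime p) (hxn : x ^ n = 1) : x = 1 :=
  eq_one_of_pow_eq_one_of_isNilpotent_sub_one (isUnit_natCast_of_coprime_of_isNilpotent hp hnp)
    (hx.isNilpotent_sub_one hp) hxn

end IsUnipotentMod

end Ring

section IntMatrix

variable {ι : Type*} [Fintype ι] [DecidableEq ι] {g : Matrix ι ι ℤ} {n p q : ℕ}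

namespace IsUnipotentMod

lemma eq_one_of_pow_eq_one (hg : IsUnipotentMod p g) (hp : p ≠ 1) (hnp : n.Coprime p)
    (hgn : g ^ n = 1) : g = 1 := by
  have hdvd (k : ℕ) (i j : ι) : (p : ℤ) ^ k ∣ (g - 1) i j := by
    let f := (Int.castRingHom (ZMod (p ^ k))).mapMatrix (m := ι)
    have hnil : IsNilpotent (p : Matrix ι ι (ZMod (p ^ k))) :=
      ⟨k, by rw [← Nat.cast_pow, ← map_natCast (algebraMap (ZMod (p ^ k)) _), ZMod.natCast_self,
        map_zero]⟩
    have hfg : f (g - 1) = 0 := by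
      rw [map_sub, map_one, sub_eq_zero]
      have hfgn : f g ^ n = 1 := by rw [← map_pow, hgn, map_one]
      exact (hg.map f).eq_one_of_pow_eq_one_of_isNilpotent hnil hnp hfgn
    have hentry : ((g - 1) i j : ZMod (p ^ k)) = 0 := congrFun₂ hfg i j
    exact_mod_cast (ZMod.intCast_zmod_eq_zero_iff_dvd _ _).1 hentry
  refine sub_eq_zero.1 (Matrix.ext fun i j ↦ ?_)
  by_contra hij
  obtain ⟨k, hk⟩ := Int.finiteMultiplicity_iff.2 ⟨(Int.natAbs_natCast p).trans_ne hp, hij⟩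
  exact hk (hdvd (k + 1) i j)

lemma exists_orderOf_eq_prime_pow (hg : IsUnipotentMod p g) (hp : p.Prime)
    (hfin : IsOfFinOrder g) : ∃ a, orderOf g = p ^ a := by
  obtain ⟨a, n, hpn, horder⟩ :=
    Nat.exists_eq_pow_mul_and_not_dvd hfin.orderOf_pos.ne' p hp.ne_one
  have hnp : n.Coprime p := (hp.coprime_iff_not_dvd.2 hpn).symm
  have hpow : g ^ p ^ a = 1 := (hg.pow (p ^ a)).eq_one_of_pow_eq_one hp.ne_one hnp <| by
    rw [← pow_mul, ← horder, pow_orderOf_eq_one]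
  exact ((Nat.dvd_prime_pow hp).1 (orderOf_dvd_of_pow_eq_one hpow)).imp fun _ ↦ And.right

lemma eq_one_of_isOfFinOrder (hgp : IsUnipotentMod p g) (hgq : IsUnipotentMod q g)
    (hp : p.Prime) (hq : q.Prime) (hpq : p ≠ q) (hfin : IsOfFinOrder g) : g = 1 := by
  obtain ⟨a, ha⟩ := hgp.exists_orderOf_eq_prime_pow hp hfin
  obtain ⟨b, hb⟩ := hgq.exists_orderOf_eq_prime_pow hq hfin
  rw [← orderOf_eq_one_iff]
  exact Nat.eq_one_of_dvd_coprimes (Nat.coprime_pow_primes a b hp hq hpq) ha.dvd hb.dvd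

end IsUnipotentMod

end IntMatrix

section CongruencePattern

variable {ι A : Type*} [Fintype ι]

lemma dvd_matrix_mul_apply [NonUnitalCommSemiring A] {M N P Q T : Matrix ι ι A}
    (hM : ∀ i j, P i j ∣ M i j) (hN : ∀ i j, Q i j ∣ N i j)
    (hT : ∀ i j k, T i k ∣ P i j * Q j k) (i k : ι) : T i k ∣ (M * N) i k := by
  rw [Matrix.mul_apply]
  exact Finset.dvd_sum fun j _ ↦ (hT i j k).trans (mul_dvd_mul (hM i j) (hN j k))

lemma natCast_dvd_matrix_of_forall_dvd_apply [DecidableEq ι] [Semiring A] {M : Matrix ι ι A} {k : ℕ}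
    (hM : ∀ i j, (k : A) ∣ M i j) : (k : Matrix ι ι A) ∣ M := by
  choose Y hY using hM
  refine ⟨of Y, Matrix.ext fun i j ↦ ?_⟩
  rw [← nsmul_eq_mul, Matrix.smul_apply, of_apply, nsmul_eq_mul, hY]

variable [DecidableEq ι] [CommRing A]

/-- The matrices congruent to the identity entrywise modulo the pattern `P`. The condition `hP`
makes the matrices divisible entrywise by `P` closed under multiplication. -/
def congruenceSubmonoid (P : Matrix ι ι A) (hP : ∀ i j k, P i k ∣ P i j * P j k) :
    Submonoid (Matrix ι ι A) where
  carrier := {g | ∀ i j, P i j ∣ (g - 1) i j}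
  one_mem' := by simp
  mul_mem' {g h} hg hh i j := by
    have hgh : g * h - 1 = (g - 1) * (h - 1) + (g - 1) + (h - 1) := by noncomm_ring
    rw [hgh]
    exact dvd_add (dvd_add (dvd_matrix_mul_apply hg hh hP i j) (hg i j)) (hh i j)

lemma diagonal_conj_mem_congruenceSubmonoid {P g : Matrix ι ι A}
    {hP : ∀ i j k, P i k ∣ P i j * P j k} {d e : ι → A} (hde : ∀ i, d i * e i = 1)
    (hg : g ∈ congruenceSubmonoid P hP) :
    diagonal d * g * diagonal e ∈ congruenceSubmonoid P hP := by
  intro i j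
  have hconj : diagonal d * g * diagonal e - 1 = diagonal d * (g - 1) * diagonal e := by
    simp [mul_sub, sub_mul, hde]
  rw [hconj, mul_diagonal, diagonal_mul]
  exact ((hg i j).mul_left _).mul_right _

end CongruencePattern

lemma pat6_dvd_mul : ∀ i j k, pat6 i k ∣ pat6 i j * pat6 j k := by decide

/-- The matrices satisfying the congruences that define `Γ₆^♮`, without the symplectic condition. -/
abbrev pat6Submonoid : Submonoid M4 := congruenceSubmonoid pat6 pat6_dvd_mul

lemma isUnipotentMod_six_of_mem_pat6Submonoid {g : M4} (hg : g ∈ pat6Submonoid) :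
    IsUnipotentMod 6 g := by
  let patSq : M4 := !![6,6,6,6; 6,6,6,6; 6,6,6,6; 6,1,6,6]
  have hsq : ∀ i j, patSq i j ∣ ((g - 1) * (g - 1)) i j := dvd_matrix_mul_apply hg hg (by decide)
  have hcube : ∀ i j, (6 : ℤ) ∣ ((g - 1) * (g - 1) * (g - 1)) i j :=
    dvd_matrix_mul_apply (T := of fun _ _ ↦ 6) hsq hg (by decide)
  exact ⟨3, pow_three' (g - 1) ▸ natCast_dvd_matrix_of_forall_dvd_apply hcube⟩

lemma eq_one_of_mem_pat6Submonoid {g : M4} (hg : g ∈ pat6Submonoid)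
    (hfin : IsOfFinOrder g) : g = 1 :=
  have hg6 := isUnipotentMod_six_of_mem_pat6Submonoid hg
  (hg6.of_dvd (p := 2) (by decide)).eq_one_of_isOfFinOrder (hg6.of_dvd (p := 3) (by decide))
    Nat.prime_two Nat.prime_three (by decide) hfin

lemma zetaM_mul_zetaM : zetaM * zetaM = 1 := by decide

lemma zetaM_conj_mem_pat6Submonoid {g : M4} (hg : g ∈ pat6Submonoid) :
    zetaM * g * zetaM ∈ pat6Submonoid := by
  have hdiag : zetaM = diagonal ![-1, 1, -1, 1] := by decide
  rw [hdiag]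
  exact diagonal_conj_mem_congruenceSubmonoid (by decide) hg

theorem torsion_in_bilevel_general (S : Set M4) (hS : ∀ g ∈ S, ∀ i j, pat6 i j ∣ (g - 1) i j)
    (γ : M4) (hγ : γ ∈ S ∪ (fun g ↦ zetaM * g) '' S) (hne : γ ≠ 1) (hfin : IsOfFinOrder γ) :
    γ * γ = 1 ∧ zetaM * γ ∈ S := by
  rcases hγ with hγS | ⟨g, hgS, rfl⟩
  · exact absurd (eq_one_of_mem_pat6Submonoid (hS γ hγS) hfin) hne
  · have hg : g ∈ pat6Submonoid := hS g hgS
    refine ⟨eq_one_of_mem_pat6Submonoid ?_ (sq (zetaM * g) ▸ hfin.pow), ?_⟩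
    · rw [← mul_assoc]
      exact mul_mem (zetaM_conj_mem_pat6Submonoid hg) hg
    · rwa [← mul_assoc, zetaM_mul_zetaM, one_mul]

/-- Every finite-order element γ ≠ I₄ of Γ₆^bil satisfies γ² = I₄ and lies in
the coset ζΓ₆^♮, i.e. ζγ ∈ Γ₆^♮. -/
theorem torsion_in_bilevel (γ : M4) (hγ : γ ∈ Gamma6bil) (hne : γ ≠ 1)
    (hfin : ∃ n : ℕ, 1 ≤ n ∧ γ ^ n = 1) :
    γ * γ = 1 ∧ zetaM * γ ∈ Gamma6nat :=
  torsion_in_bilevel_general Gamma6nat (fun _ hg ↦ hg.2) γ hγ hne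
    (isOfFinOrder_iff_pow_eq_one.2 hfin)
end

section
/- Γ₆^♮ is contained in the subgroup of Sp(4,ℚ) generated by the matrix J₆ together with all matrices j(δ,[m,n;k]) with δ ∈ Γ(6) and m,n,k ∈ ℤ. -/
open Matrix Polynomial

/-- j(γ,[m,n;k]) for γ = [[a,b],[c,d]] : the matrix [[a,m,c,0],[0,1,0,0],[b,n,d,0],[n,k,−m,1]]. -/
def jmat (a b c d m n k : ℤ) : M4 := !![a,m,c,0; 0,1,0,0; b,n,d,0; n,k,-m,1]

/-- 4×4 rational matrices. -/
abbrev M4Q : Type := Matrix (Fin 4) (Fin 4) ℚ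

/-- J₆ = [[0,0,−1,0],[0,0,0,−6],[1,0,0,0],[0,1/6,0,0]] ∈ Sp(4,ℚ). -/
def J6mat : M4Q := !![0,0,-1,0; 0,0,0,-6; 1,0,0,0; 0,1/6,0,0]

/-- The generators: J₆ together with all j(δ,[m,n;k]) for δ ∈ Γ(6), viewed as
units of the matrix ring. -/
def genSet : Set M4Qˣ :=
  {u | (↑u : M4Q) = J6mat ∨
    ∃ a b c d m n k : ℤ, a * d - b * c = 1 ∧
      (6:ℤ) ∣ a - 1 ∧ (6:ℤ) ∣ b ∧ (6:ℤ) ∣ c ∧ (6:ℤ) ∣ d - 1 ∧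
      (↑u : M4Q) = (jmat a b c d m n k).map (Int.cast : ℤ → ℚ)}

/-!
Let `t ≠ 0` (here `t = 6`). Conjugating the Heisenberg group `j(1, [m, n; k])` by `J_t` gives an
opposite Heisenberg group, and right multiplication by these two groups acts on the second row
`(t a, b, t c, t² d)` of `γ ∈ Γ_t^♮`, where `b ≡ 1 mod t`. The row is unimodular, so once `a ≠ 0`,
shifting first `b` by a multiple of `t² d` and then `c` by a multiple of `b` makes `a` and `c`
coprime; a Bézout relation then turns `b` into `1`, after which the opposite group clears the other
entries. A symplectic matrix with second row `(0, 1, 0, 0)` is the product of a Heisenberg element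
and some `j(δ, [0, 0; 0])`, and the congruences defining `Γ_t^♮` force `δ ∈ Γ(t)`.
-/

section Coprime

variable {R : Type*} [CommRing R] [IsDomain R] [IsPrincipalIdealRing R]

theorem exists_isCoprime_add_mul {g x y : R} (hg : g ≠ 0)
    (h : ∀ p, Prime p → p ∣ g → p ∣ x → ¬p ∣ y) : ∃ k, IsCoprime g (x + k * y) := by
  classical
  -- `k` collects the prime factors of `g` that do not divide `x`.
  set S := (UniqueFactorizationMonoid.factors g).filter (¬· ∣ x)
  refine ⟨S.prod, isCoprime_of_prime_dvd (fun h0 ↦ hg h0.1) fun p hp hpg hpxy ↦ ?_⟩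
  by_cases hpx : p ∣ x
  · rcases hp.dvd_or_dvd ((dvd_add_right hpx).mp hpxy) with hpS | hpy
    · obtain ⟨q, hqS, hpq⟩ := hp.exists_mem_multiset_dvd hpS
      obtain ⟨hq, hqx⟩ := Multiset.mem_filter.mp hqS
      have hqp := hp.irreducible.associated_of_dvd
        (UniqueFactorizationMonoid.irreducible_of_factor q hq) hpq
      exact hqx (hqp.symm.dvd.trans hpx)
    · exact h p hp hpg hpx hpy
  · obtain ⟨q, hq, hpq⟩ :=
      UniqueFactorizationMonoid.exists_mem_factors_of_dvd hg hp.irreducible hpg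
    have hqS : q ∈ S := Multiset.mem_filter.mpr ⟨hq, fun hqx ↦ hpx (hpq.dvd.trans hqx)⟩
    have hpS : p ∣ S.prod := hpq.dvd.trans (Multiset.dvd_prod hqS)
    exact hpx ((dvd_add_left (hpS.mul_right y)).mp hpxy)

theorem exists_isCoprime_add_mul_add_mul [GCDMonoid R] {a b c e : R} (ha : a ≠ 0)
    (h : ∀ p, Prime p → p ∣ a → p ∣ b → p ∣ c → ¬p ∣ e) :
    ∃ k m, IsCoprime a (c + m * (b + k * e)) := by
  obtain ⟨k, hk⟩ : ∃ k, IsCoprime (gcd a c) (b + k * e) :=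
    exists_isCoprime_add_mul (fun h0 ↦ ha ((gcd_eq_zero_iff a c).mp h0).1)
      fun p hp hpg hpb ↦ h p hp (hpg.trans (gcd_dvd_left a c)) hpb (hpg.trans (gcd_dvd_right a c))
  obtain ⟨m, hm⟩ : ∃ m, IsCoprime a (c + m * (b + k * e)) :=
    exists_isCoprime_add_mul ha fun p hp hpa hpc hpb ↦
      hp.not_isUnit (hk.isUnit_of_dvd' (dvd_gcd hpa hpc) hpb)
  exact ⟨k, m, hm⟩

end Coprime

section Symplectic

theorem mul_mul_transpose_eq_of_transpose_mul_mul_eq {n R : Type*} [Fintype n] [DecidableEq n]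
    [CommRing R] {A S : Matrix n n R} (hS : S * S = -1) (h : Aᵀ * S * A = S) :
    A * S * Aᵀ = S := by
  have hleft : -(S * Aᵀ * S) * A = 1 := by
    rw [neg_mul, mul_assoc, mul_assoc, ← mul_assoc Aᵀ, h, hS, neg_neg]
  have hright : A * (S * Aᵀ * S) = -1 := by
    rw [← neg_eq_iff_eq_neg, ← mul_neg]
    exact mul_eq_one_comm.mp hleft
  calc A * S * Aᵀ = -(A * (S * Aᵀ * (S * S))) := by rw [hS]; simp [mul_assoc]
    _ = -(A * (S * Aᵀ * S) * S) := by simp only [mul_assoc]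
    _ = S := by rw [hright]; simp

variable {γ : M4}

theorem mul_mem_Sp4Z {δ : M4} (hγ : γ ∈ Sp4Z) (hδ : δ ∈ Sp4Z) : γ * δ ∈ Sp4Z :=
  calc (γ * δ)ᵀ * J4 * (γ * δ) = δᵀ * (γᵀ * J4 * γ) * δ := by
        simp only [transpose_mul, mul_assoc]
    _ = J4 := by rw [hγ, hδ]

theorem symplectic_columns (hγ : γ ∈ Sp4Z) (i j : Fin 4) :
    γ 0 i * γ 2 j + γ 1 i * γ 3 j - γ 2 i * γ 0 j - γ 3 i * γ 1 j = J4 i j := by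
  rw [← congrFun₂ (show γᵀ * J4 * γ = J4 from hγ) i j]
  simp [J4, Matrix.mul_apply, Fin.sum_univ_four]
  ring

theorem symplectic_rows (hγ : γ ∈ Sp4Z) (i j : Fin 4) :
    γ i 0 * γ j 2 + γ i 1 * γ j 3 - γ i 2 * γ j 0 - γ i 3 * γ j 1 = J4 i j := by
  have hJ : J4 * J4 = -1 := by decide
  rw [← congrFun₂ (mul_mul_transpose_eq_of_transpose_mul_mul_eq hJ hγ) i j]
  simp [J4, Matrix.mul_apply, Fin.sum_univ_four]
  ring

end Symplectic

/-- The Levi element `j(δ, [0, 0; 0])` with `δ = [[a, b], [c, d]]`. -/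
def levi (a b c d : ℤ) : M4 := jmat a b c d 0 0 0

/-- The Heisenberg element `j(1, [m, n; k])`. -/
def heisenberg (m n k : ℤ) : M4 := jmat 1 0 0 1 m n k

/-- The opposite Heisenberg element of level `t`: the conjugate of `heisenberg (-n) m (-k)` by
`levelJ t`. -/
def oppHeisenberg (t m n k : ℤ) : M4 :=
  !![1,0,0,-t*m; t*n,1,-t*m,t^2*k; 0,0,1,-t*n; 0,0,0,1]

/-- The congruence pattern of `Γ_t^♮`. -/
def levelPattern (t : ℤ) : M4 := !![t,1,t,t; t,t,t,t^2; t,1,t,t; 1,1,1,t]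

theorem levelPattern_dvd_mul (t : ℤ) (i j k : Fin 4) :
    levelPattern t i j ∣ levelPattern t i k * levelPattern t k j := by
  fin_cases i <;> fin_cases j <;> fin_cases k <;> simp [levelPattern, pow_two]

/-- The group `Γ_t^♮` of level `t`, as a multiplicative monoid of integral matrices. -/
def levelGroup (t : ℤ) : Submonoid M4 where
  carrier := {γ | γ ∈ Sp4Z ∧ ∀ i j, levelPattern t i j ∣ (γ - 1) i j}
  one_mem' := ⟨by simp [Sp4Z], by simp⟩
  mul_mem' := by
    rintro γ δ ⟨hγ, hγt⟩ ⟨hδ, hδt⟩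
    refine ⟨mul_mem_Sp4Z hγ hδ, fun i j ↦ ?_⟩
    have expand : γ * δ - 1 = (γ - 1) * (δ - 1) + (γ - 1) + (δ - 1) := by noncomm_ring
    rw [expand, Matrix.add_apply, Matrix.add_apply, Matrix.mul_apply]
    refine dvd_add (dvd_add (Finset.dvd_sum fun k _ ↦ ?_) (hγt i j)) (hδt i j)
    exact (levelPattern_dvd_mul t i j k).trans (mul_dvd_mul (hγt i k) (hδt k j))

theorem heisenberg_mem_levelGroup (t m n k : ℤ) : heisenberg m n k ∈ levelGroup t := by
  refine ⟨?_, fun i j ↦ ?_⟩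
  · change _ = _
    ext i j
    fin_cases i <;> fin_cases j <;>
      simp [heisenberg, jmat, J4, Matrix.mul_apply, Fin.sum_univ_four]
    ring
  · fin_cases i <;> fin_cases j <;> simp [heisenberg, jmat, levelPattern]

theorem oppHeisenberg_mem_levelGroup (t m n k : ℤ) : oppHeisenberg t m n k ∈ levelGroup t := by
  refine ⟨?_, fun i j ↦ ?_⟩
  · change _ = _
    ext i j
    fin_cases i <;> fin_cases j <;>
      simp [oppHeisenberg, J4, Matrix.mul_apply, Fin.sum_univ_four]
    ring
  · fin_cases i <;> fin_cases j <;> simp [oppHeisenberg, levelPattern]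

theorem eq_heisenberg_mul_levi {γ : M4} (hγ : γ ∈ Sp4Z) (hrow : γ 1 = ![0, 1, 0, 0]) :
    γ = heisenberg (γ 0 1) (γ 2 1) (γ 3 1) * levi (γ 0 0) (γ 2 0) (γ 0 2) (γ 2 2) := by
  have h03 : γ 0 3 = 0 := by simpa [hrow, J4] using symplectic_rows hγ 0 1
  have h23 : γ 2 3 = 0 := by simpa [hrow, J4] using symplectic_rows hγ 2 1
  have h33 : γ 3 3 = 1 := by simpa [hrow, J4] using symplectic_rows hγ 3 1
  have h30 : γ 0 0 * γ 2 1 - γ 2 0 * γ 0 1 - γ 3 0 = 0 := by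
    simpa [hrow, J4] using symplectic_columns hγ 0 1
  have h32 : γ 0 2 * γ 2 1 - γ 2 2 * γ 0 1 - γ 3 2 = 0 := by
    simpa [hrow, J4] using symplectic_columns hγ 2 1
  ext i j
  fin_cases i <;> fin_cases j <;>
    simp [heisenberg, levi, jmat, Matrix.mul_apply, Fin.sum_univ_four, hrow] <;> linarith

section Generators

/-- The element `J_t` of `Sp(4,ℚ)` generalising `J₆`; it is invertible only for `t ≠ 0`. -/
def levelJ (t : ℤ) : M4Q := !![0,0,-1,0; 0,0,0,-t; 1,0,0,0; 0,1/t,0,0]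

/-- The generators of level `t`. Only the factors `j(δ, [0, 0; 0])` and `j(1, [m, n; k])` occur:
the matrix `j(δ, [m, n; k])`, as normalised here, need not be symplectic. -/
def levelGenerators (t : ℤ) : Set M4Qˣ :=
  {u | (u : M4Q) = levelJ t ∨
    (∃ a b c d : ℤ, a * d - b * c = 1 ∧ t ∣ a - 1 ∧ t ∣ b ∧ t ∣ c ∧ t ∣ d - 1 ∧
      (u : M4Q) = (levi a b c d).map (Int.cast : ℤ → ℚ)) ∨
    ∃ m n k : ℤ, (u : M4Q) = (heisenberg m n k).map (Int.cast : ℤ → ℚ)}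

/-- The integral matrices that lie in the subgroup generated by `levelGenerators t`. -/
def generatedIntegral (t : ℤ) : Submonoid M4 :=
  ((Subgroup.closure (levelGenerators t)).toSubmonoid.map (Units.coeHom M4Q)).comap
    (Int.castRingHom ℚ).mapMatrix

variable {t : ℤ}

theorem mem_of_mul_mem_generatedIntegral {γ ε : M4} (hε : ε ∈ generatedIntegral t)
    (h : γ * ε ∈ generatedIntegral t) : γ ∈ generatedIntegral t := by
  obtain ⟨v, hv, hvε⟩ := hε
  obtain ⟨u, hu, huγ⟩ := h
  refine ⟨u * v⁻¹, Subgroup.mul_mem _ hu (Subgroup.inv_mem _ hv), ?_⟩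
  rw [map_mul, ← hvε] at huγ
  exact (Units.mul_inv_eq_iff_eq_mul v).mpr huγ

theorem det_jmat (a b c d m n k : ℤ) : (jmat a b c d m n k).det = a * d - b * c := by
  simp [jmat, det_succ_row_zero, Fin.sum_univ_succ, Fin.succAbove]
  ring

theorem exists_unit_eq_jmat_map {a b c d : ℤ} (h : a * d - b * c = 1) (m n k : ℤ) :
    ∃ u : M4Qˣ, (u : M4Q) = (jmat a b c d m n k).map (Int.cast : ℤ → ℚ) := by
  have hunit : IsUnit (jmat a b c d m n k) := by
    rw [isUnit_iff_isUnit_det, det_jmat, h]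
    exact isUnit_one
  exact hunit.map (Int.castRingHom ℚ).mapMatrix

theorem levi_mem_generatedIntegral {a b c d : ℤ} (h : a * d - b * c = 1) (ha : t ∣ a - 1)
    (hb : t ∣ b) (hc : t ∣ c) (hd : t ∣ d - 1) : levi a b c d ∈ generatedIntegral t := by
  obtain ⟨u, hu⟩ := exists_unit_eq_jmat_map h 0 0 0
  exact ⟨u, Subgroup.subset_closure (.inr (.inl ⟨a, b, c, d, h, ha, hb, hc, hd, hu⟩)), hu⟩

theorem heisenberg_mem_generatedIntegral (m n k : ℤ) :
    heisenberg m n k ∈ generatedIntegral t := by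
  obtain ⟨u, hu⟩ := exists_unit_eq_jmat_map (by norm_num : (1 * 1 - 0 * 0 : ℤ) = 1) m n k
  exact ⟨u, Subgroup.subset_closure (.inr (.inr ⟨m, n, k, hu⟩)), hu⟩

theorem isUnit_levelJ (ht : t ≠ 0) : IsUnit (levelJ t) := by
  refine IsUnit.of_mul_eq_one (-levelJ t) ?_
  ext i j
  fin_cases i <;> fin_cases j <;>
    simp [levelJ, Matrix.mul_apply, Fin.sum_univ_four, ht]

theorem oppHeisenberg_mul_levelJ (ht : t ≠ 0) (m n k : ℤ) :
    (oppHeisenberg t m n k).map (Int.cast : ℤ → ℚ) * levelJ t =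
      levelJ t * (heisenberg (-n) m (-k)).map (Int.cast : ℤ → ℚ) := by
  ext i j
  fin_cases i <;> fin_cases j <;>
    simp [levelJ, oppHeisenberg, heisenberg, jmat, Matrix.mul_apply, Fin.sum_univ_four] <;>
    field_simp

theorem oppHeisenberg_mem_generatedIntegral (ht : t ≠ 0) (m n k : ℤ) :
    oppHeisenberg t m n k ∈ generatedIntegral t := by
  obtain ⟨w, hw⟩ := isUnit_levelJ ht
  obtain ⟨u, hu, huh⟩ := heisenberg_mem_generatedIntegral (t := t) (-n) m (-k)
  have hwmem : w ∈ Subgroup.closure (levelGenerators t) := Subgroup.subset_closure (.inl hw)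
  refine ⟨w * u * w⁻¹,
    Subgroup.mul_mem _ (Subgroup.mul_mem _ hwmem hu) (Subgroup.inv_mem _ hwmem), ?_⟩
  refine (Units.mul_inv_eq_iff_eq_mul w).mpr ?_
  calc ((w * u : M4Qˣ) : M4Q) = levelJ t * (heisenberg (-n) m (-k)).map (Int.cast : ℤ → ℚ) := by
        rw [Units.val_mul, hw]
        exact congrArg (levelJ t * ·) huh
    _ = (oppHeisenberg t m n k).map (Int.cast : ℤ → ℚ) * w := by
        rw [hw, oppHeisenberg_mul_levelJ ht]

end Generators

/-- `γ ∈ Γ_t^♮` has second row `(t a, b, t c, t² d)`; the powers of `t` are those which the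
congruence pattern forces. -/
structure HasSecondRow (t : ℤ) (γ : M4) (a b c d : ℤ) : Prop where
  mem : γ ∈ levelGroup t
  row : γ 1 = ![t * a, b, t * c, t ^ 2 * d]

theorem exists_hasSecondRow {t : ℤ} {γ : M4} (hγ : γ ∈ levelGroup t) :
    ∃ a b c d, HasSecondRow t γ a b c d := by
  obtain ⟨a, ha⟩ : t ∣ γ 1 0 := by simpa [levelPattern] using hγ.2 1 0
  obtain ⟨c, hc⟩ : t ∣ γ 1 2 := by simpa [levelPattern] using hγ.2 1 2
  obtain ⟨d, hd⟩ : t ^ 2 ∣ γ 1 3 := by simpa [levelPattern] using hγ.2 1 3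
  refine ⟨a, γ 1 1, c, d, hγ, ?_⟩
  ext j
  fin_cases j <;> simp [ha, hc, hd]

namespace HasSecondRow

variable {t a b c d : ℤ} {γ : M4}

theorem mul_heisenberg (h : HasSecondRow t γ a b c d) (m n k : ℤ) :
    HasSecondRow t (γ * heisenberg m n k) (a + t * n * d)
      (b + t * (m * a + n * c) + t ^ 2 * k * d) (c - t * m * d) d := by
  refine ⟨mul_mem h.mem (heisenberg_mem_levelGroup t m n k), ?_⟩
  ext j
  fin_cases j <;> simp [Matrix.mul_apply, Fin.sum_univ_four, heisenberg, jmat, h.row] <;> ring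

theorem mul_oppHeisenberg (h : HasSecondRow t γ a b c d) (m n k : ℤ) :
    HasSecondRow t (γ * oppHeisenberg t m n k) (a + n * b) b (c - m * b)
      (d - m * a - n * c + k * b) := by
  refine ⟨mul_mem h.mem (oppHeisenberg_mem_levelGroup t m n k), ?_⟩
  ext j
  fin_cases j <;> simp [Matrix.mul_apply, Fin.sum_univ_four, oppHeisenberg, h.row] <;> ring

theorem bezout (h : HasSecondRow t γ a b c d) :
    t * a * γ 3 2 + b * γ 3 3 - t * c * γ 3 0 - t ^ 2 * d * γ 3 1 = 1 := by
  simpa [h.row, J4] using symplectic_rows h.mem.1 1 3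

theorem mem_generatedIntegral_of_unitVector (h : HasSecondRow t γ 0 1 0 0) :
    γ ∈ generatedIntegral t := by
  have hdet : γ 0 0 * γ 2 2 - γ 2 0 * γ 0 2 = 1 := by
    simpa [h.row, J4] using symplectic_columns h.mem.1 0 2
  have h00 : t ∣ γ 0 0 - 1 := h.mem.2 0 0
  have h20 : t ∣ γ 2 0 := by simpa [levelPattern] using h.mem.2 2 0
  have h02 : t ∣ γ 0 2 := by simpa [levelPattern] using h.mem.2 0 2
  have h22 : t ∣ γ 2 2 - 1 := h.mem.2 2 2
  rw [eq_heisenberg_mul_levi h.mem.1 (by simpa using h.row)]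
  exact mul_mem (heisenberg_mem_generatedIntegral _ _ _)
    (levi_mem_generatedIntegral hdet h00 h20 h02 h22)

theorem mem_generatedIntegral_of_diag_eq_one (ht : t ≠ 0) (h : HasSecondRow t γ a 1 c d) :
    γ ∈ generatedIntegral t := by
  refine mem_of_mul_mem_generatedIntegral (oppHeisenberg_mem_generatedIntegral ht c (-a) (-d))
    (mem_generatedIntegral_of_unitVector ?_)
  convert h.mul_oppHeisenberg c (-a) (-d) using 2 <;> ring

theorem mem_generatedIntegral_of_isCoprime (ht : t ≠ 0) (h : HasSecondRow t γ a b c d)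
    (hac : IsCoprime a c) : γ ∈ generatedIntegral t := by
  obtain ⟨s, hs⟩ : t ∣ b - 1 := by simpa [levelPattern, h.row] using h.mem.2 1 1
  obtain ⟨x, y, hxy⟩ := hac
  refine mem_of_mul_mem_generatedIntegral (heisenberg_mem_generatedIntegral (-s * x) (-s * y) 0) ?_
  have hrow := h.mul_heisenberg (-s * x) (-s * y) 0
  have hb : b + t * (-s * x * a + -s * y * c) + t ^ 2 * 0 * d = 1 := by
    linear_combination hs - t * s * hxy
  rw [hb] at hrow
  exact hrow.mem_generatedIntegral_of_diag_eq_one ht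

theorem not_dvd_of_dvd (h : HasSecondRow t γ a b c d) {p : ℤ} (hp : Prime p) (ha : p ∣ a)
    (hb : p ∣ b) (hc : p ∣ c) : ¬p ∣ t ^ 2 * d := fun hd ↦ by
  refine hp.not_dvd_one ?_
  rw [← h.bezout]
  exact ((((ha.mul_left t).mul_right _).add (hb.mul_right _)).sub
    ((hc.mul_left t).mul_right _)).sub (hd.mul_right _)

theorem mem_generatedIntegral_of_fst_ne_zero (ht : t ≠ 0) (h : HasSecondRow t γ a b c d)
    (ha : a ≠ 0) : γ ∈ generatedIntegral t := by
  obtain ⟨k, m, hkm⟩ : ∃ k m : ℤ, IsCoprime a (c + m * (b + k * (t ^ 2 * d))) :=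
    exists_isCoprime_add_mul_add_mul ha fun p hp ↦ h.not_dvd_of_dvd hp
  refine mem_of_mul_mem_generatedIntegral (heisenberg_mem_generatedIntegral 0 0 k) <|
    mem_of_mul_mem_generatedIntegral (oppHeisenberg_mem_generatedIntegral ht (-m) 0 0) <|
    ((h.mul_heisenberg 0 0 k).mul_oppHeisenberg (-m) 0 0).mem_generatedIntegral_of_isCoprime ht ?_
  convert hkm using 2 <;> ring

theorem mem_generatedIntegral (ht : t ≠ 0) (h : HasSecondRow t γ a b c d) :
    γ ∈ generatedIntegral t := by
  rcases eq_or_ne b 0 with rfl | hb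
  · refine mem_of_mul_mem_generatedIntegral
      (heisenberg_mem_generatedIntegral (γ 3 2) (-γ 3 0) (-γ 3 1)) ?_
    have hrow := h.mul_heisenberg (γ 3 2) (-γ 3 0) (-γ 3 1)
    have hone : 0 + t * (γ 3 2 * a + -γ 3 0 * c) + t ^ 2 * -γ 3 1 * d = 1 := by
      linear_combination h.bezout
    rw [hone] at hrow
    exact hrow.mem_generatedIntegral_of_diag_eq_one ht
  rcases eq_or_ne a 0 with rfl | ha
  · refine mem_of_mul_mem_generatedIntegral (oppHeisenberg_mem_generatedIntegral ht 0 1 0) <|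
      (h.mul_oppHeisenberg 0 1 0).mem_generatedIntegral_of_fst_ne_zero ht ?_
    simpa using hb
  · exact h.mem_generatedIntegral_of_fst_ne_zero ht ha

end HasSecondRow

theorem Gamma6nat_in_generated_subgroup_general {t : ℤ} (ht : t ≠ 0) (γ : M4)
    (hγ : γ ∈ levelGroup t) :
    ∃ u ∈ Subgroup.closure (levelGenerators t), (↑u : M4Q) = γ.map (Int.cast : ℤ → ℚ) := by
  obtain ⟨a, b, c, d, h⟩ := exists_hasSecondRow hγ
  exact h.mem_generatedIntegral ht

theorem levelPattern_six : levelPattern 6 = pat6 := by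
  simp [levelPattern, pat6]

theorem levelGenerators_six_subset_genSet : levelGenerators 6 ⊆ genSet := by
  rintro u (hJ | ⟨a, b, c, d, hdet, ha, hb, hc, hd, hu⟩ | ⟨m, n, k, hu⟩)
  · exact .inl (by simp [hJ, levelJ, J6mat])
  · exact .inr ⟨a, b, c, d, 0, 0, 0, hdet, ha, hb, hc, hd, hu⟩
  · exact .inr ⟨1, 0, 0, 1, m, n, k, by simp, by simp, by simp, by simp, by simp, hu⟩

/-- Γ₆^♮ is contained in the subgroup generated by J₆ and the matrices
j(δ,[m,n;k]) with δ ∈ Γ(6), m,n,k ∈ ℤ. -/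
theorem Gamma6nat_in_generated_subgroup (γ : M4) (hγ : γ ∈ Gamma6nat) :
    ∃ u ∈ Subgroup.closure genSet, (↑u : M4Q) = γ.map (Int.cast : ℤ → ℚ) := by
  obtain ⟨u, hu, huγ⟩ := Gamma6nat_in_generated_subgroup_general (t := 6) (by norm_num) γ
    ⟨hγ.1, levelPattern_six ▸ hγ.2⟩
  exact ⟨u, Subgroup.closure_mono levelGenerators_six_subset_genSet hu, huγ⟩
end
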